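/- arXiv:1504.04685 — 2 statements merged into one kernel-verified Lean document; each statement's English description precedes it below -/
import Mathlib

section
/- Let F_1 ⊆ F_2 ⊆ ⋯ ⊆ F_n be a chain of finite groups such that for every 2 ≤ i ≤ n the restriction to F_{i-1} of every complex irreducible representation of F_i is multiplicity free. Then the set of elements a ∈ ℂ[F_n] that act by a scalar on every nonzero Gelfand–Tsetlin subspace of every complex irreducible F_n-module equals the subalgebra of ℂ[F_n] generated by the union of the centers of ℂ[F_1], ℂ[F_2], …, ℂ[F_n]. -/
/-!
For a finite-dimensional semisimple algebra `S` over `ℂ`, Wedderburn–Artin identifies `S` with a finite product of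
matrix algebras. The center of `S` is then the product of the scalar matrices, the primitive
central idempotents are the units of the factors, they add up to `1`, and each central element
acts on each of them by a scalar.

Write `P` for the product `e₁ ⋯ eₙ` of a choice of primitive central idempotents of the algebras
`ℂ[Fᵢ]`. The elements `a` for which `a * P` is always a multiple of `P` form an algebra. It contains
the center of each `ℂ[Fᵢ]`: such a central `z` commutes with all the factors of `P` because
the groups form a chain, and `z * eᵢ` is a multiple of `eᵢ`. Conversely, `1` is the sum of all the
`P`, so an element `a` with this property is a linear combination of the `P`, which are products of
central elements (`mem_of_forall_mul_prod_mem`).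

It remains to see that acting by scalars on Gelfand–Tsetlin subspaces gives `a * P = c • P`
(`mul_eq_smul_of_scalar_action`). As `eₙ` is the unit of one matrix factor of `ℂ[K]`, the element
`P` lives in that factor, where it is determined by its action on the space of column vectors, a
simple module.
-/

set_option synthInstance.maxHeartbeats 1000000

/-- The group algebra of a subgroup `H ≤ K`, as a subalgebra of `ℂ[K]`. -/
noncomputable def groupSubalgebra (K : Type*) [Group K] (H : Subgroup K) :
    Subalgebra ℂ (MonoidAlgebra ℂ K) :=
  Algebra.adjoin ℂ (Set.range fun h : H => MonoidAlgebra.of ℂ K (h : K))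

/-- The center of a subalgebra `S` of `A`, as a subset of `A`. -/
def subCenter {A : Type*} [Ring A] [Algebra ℂ A] (S : Subalgebra ℂ A) : Set A :=
  {a | a ∈ S ∧ ∀ b ∈ S, a * b = b * a}

/-- A module is multiplicity free if any two isomorphic simple submodules coincide; for
semisimple modules this says that each isomorphism class of irreducible module occurs at most
once in a decomposition into irreducibles. -/
def IsMultiplicityFree (R : Type*) [Ring R] (V : Type*) [AddCommGroup V] [Module R V] : Prop :=
  ∀ S T : Submodule R V, IsSimpleModule R S → IsSimpleModule R T →
    Nonempty (S ≃ₗ[R] T) → S = T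

/-- `e` is a primitive central idempotent of the subalgebra `S` of `B`: it lies in `S`, is a
nonzero idempotent, is central in `S`, and cannot be written as the sum of two nonzero
orthogonal central idempotents of `S`. -/
def IsPrimitiveCentralIdempotent {B : Type*} [Ring B] [Algebra ℂ B]
    (S : Subalgebra ℂ B) (e : B) : Prop :=
  e ∈ S ∧ e ≠ 0 ∧ e * e = e ∧ (∀ b ∈ S, e * b = b * e) ∧
    ∀ f g : B, f ∈ S → g ∈ S → (∀ b ∈ S, f * b = b * f) → (∀ b ∈ S, g * b = b * g) →
      f * f = f → g * g = g → f * g = 0 → f + g = e → f = 0 ∨ g = 0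

/-! ### Central idempotents in products of matrix algebras -/

section Wedderburn

variable {B : Type*} [Ring B] [Algebra ℂ B]
  {m : ℕ} {d : Fin m → ℕ}

theorem exists_scalar_of_central (x : ∀ i, Matrix (Fin (d i)) (Fin (d i)) ℂ)
    (hx : ∀ y, x * y = y * x) (i : Fin m) : ∃ c : ℂ, x i = c • 1 := by
  have h : x i ∈ Set.range (Matrix.scalar (Fin (d i)) : ℂ → Matrix _ _ ℂ) := by
    rw [Matrix.mem_range_scalar_iff_commute_single']
    intro a b
    have := congrFun (hx (Pi.single i (Matrix.single a b 1))) i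
    rw [commute_iff_eq]
    simpa using this.symm
  obtain ⟨c, hc⟩ := h
  exact ⟨c, by rw [← hc, Matrix.smul_one_eq_diagonal]; rfl⟩

/-- The center of the image of `ψ` corresponds to the center of the product of matrix algebras. -/
theorem exists_central_preimage {ψ : (∀ i, Matrix (Fin (d i)) (Fin (d i)) ℂ) →ₐ[ℂ] B}
    (hψ : Function.Injective ψ) {z : B} (hz : z ∈ subCenter ψ.range) :
    ∃ x, ψ x = z ∧ ∀ y, x * y = y * x := by
  obtain ⟨⟨x, rfl⟩, h⟩ := hz
  refine ⟨x, rfl, fun y => hψ ?_⟩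
  rw [map_mul, map_mul]
  exact h _ ⟨y, rfl⟩

/-- The unit of each matrix factor is primitive: two central elements of its factor are scalars,
so orthogonality makes one of them vanish. -/
theorem isPrimitiveCentralIdempotent_single [∀ i, NeZero (d i)]
    {ψ : (∀ i, Matrix (Fin (d i)) (Fin (d i)) ℂ) →ₐ[ℂ] B}
    (hψ : Function.Injective ψ) (i : Fin m) :
    IsPrimitiveCentralIdempotent ψ.range (ψ (Pi.single i 1)) := by
  refine ⟨⟨_, rfl⟩, ?_, ?_, ?_, ?_⟩
  · rw [Ne, map_eq_zero_iff ψ hψ, Pi.single_eq_zero_iff]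
    exact one_ne_zero
  · rw [← map_mul, ← Pi.single_mul, one_mul]
  · rintro _ ⟨y, rfl⟩
    change ψ _ * ψ y = ψ y * ψ _
    rw [← map_mul, ← map_mul]
    congr 1
    ext1 j
    by_cases h : j = i
    · subst h; simp
    · simp [Pi.single_eq_of_ne h]
  · intro f g hf hg hfc hgc hff hgg hfg hsum
    obtain ⟨x, rfl, hx⟩ := exists_central_preimage hψ ⟨hf, hfc⟩
    obtain ⟨y, rfl, hy⟩ := exists_central_preimage hψ ⟨hg, hgc⟩
    rw [← map_mul] at hff hgg hfg
    rw [← map_add] at hsum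
    replace hff := hψ hff
    replace hgg := hψ hgg
    replace hsum := hψ hsum
    rw [map_eq_zero_iff ψ hψ] at hfg ⊢
    rw [map_eq_zero_iff ψ hψ]
    have hx0 : ∀ j, j ≠ i → x j = 0 := by
      intro j hj
      have h1 : x j + y j = 0 := by simpa [Pi.single_eq_of_ne hj] using congrFun hsum j
      have h2 : x j * x j = x j := congrFun hff j
      have h3 : x j * y j = 0 := congrFun hfg j
      rw [eq_neg_of_add_eq_zero_right h1, mul_neg, h2] at h3
      exact neg_eq_zero.1 h3
    have hy0 : ∀ j, j ≠ i → y j = 0 := by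
      intro j hj
      have h1 : x j + y j = 0 := by simpa [Pi.single_eq_of_ne hj] using congrFun hsum j
      simpa [hx0 j hj] using h1
    obtain ⟨c, hc⟩ := exists_scalar_of_central x hx i
    obtain ⟨c', hc'⟩ := exists_scalar_of_central y hy i
    have h3 : x i * y i = 0 := congrFun hfg i
    have h4 : c * c' = 0 := by simpa [hc, hc', or_comm] using h3
    rcases mul_eq_zero.1 h4 with h | h
    · left
      ext1 j
      by_cases hj : j = i
      · subst hj; simp [hc, h]
      · exact hx0 j hj
    · right
      ext1 j
      by_cases hj : j = i
      · subst hj; simp [hc', h]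
      · exact hy0 j hj

/-- Every primitive central idempotent is the unit of a matrix factor: one of its components is
nonzero, hence is the identity matrix, and primitivity forces the other components to vanish. -/
theorem exists_eq_single_of_isPrimitiveCentralIdempotent [∀ i, NeZero (d i)]
    {ψ : (∀ i, Matrix (Fin (d i)) (Fin (d i)) ℂ) →ₐ[ℂ] B}
    (hψ : Function.Injective ψ) {e : B} (he : IsPrimitiveCentralIdempotent ψ.range e) :
    ∃ i, e = ψ (Pi.single i 1) := by
  obtain ⟨heS, he0, hee, hec, hprim⟩ := he
  obtain ⟨x, rfl, hx⟩ := exists_central_preimage hψ ⟨heS, hec⟩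
  have hxx : x * x = x := hψ (by rw [map_mul, hee])
  have hx0 : x ≠ 0 := by rintro rfl; simp at he0
  obtain ⟨i, hi⟩ := Function.ne_iff.1 hx0
  obtain ⟨c, hc⟩ := exists_scalar_of_central x hx i
  have hc1 : c = 1 := by
    have h : x i * x i = x i := congrFun hxx i
    rw [hc] at h hi
    have hc0 : c ≠ 0 := by rintro rfl; simp at hi
    have h2 : (c * c) • (1 : Matrix (Fin (d i)) (Fin (d i)) ℂ) = c • 1 := by
      simpa [smul_smul] using h
    exact mul_left_cancel₀ hc0 (by simpa using smul_left_injective ℂ one_ne_zero h2)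
  rw [hc1, one_smul] at hc
  have hs := isPrimitiveCentralIdempotent_single hψ i
  have hsx : (Pi.single i 1 : ∀ i, Matrix (Fin (d i)) (Fin (d i)) ℂ) * x = Pi.single i 1 := by
    ext1 j
    by_cases h : j = i
    · subst h; simp [hc]
    · simp [Pi.single_eq_of_ne h]
  have hss : (Pi.single i 1 : ∀ i, Matrix (Fin (d i)) (Fin (d i)) ℂ) * Pi.single i 1
      = Pi.single i 1 := by rw [← Pi.single_mul, one_mul]
  refine ⟨i, ?_⟩
  rcases hprim (ψ (Pi.single i 1)) (ψ (x - Pi.single i 1)) ⟨_, rfl⟩ ⟨_, rfl⟩ hs.2.2.2.1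
    (fun b hb => by rw [map_sub, sub_mul, mul_sub, hec b hb, hs.2.2.2.1 b hb]) hs.2.2.1
    (by rw [← map_mul, sub_mul, mul_sub, mul_sub, hxx, hx, hsx, hss, sub_self, sub_zero])
    (by rw [← map_mul, mul_sub, hsx, hss, sub_self, map_zero])
    (by rw [← map_add, add_sub_cancel]) with h | h
  · exact absurd h hs.2.1
  · rw [map_sub, sub_eq_zero] at h
    exact h

theorem exists_central_mul_single_eq_smul
    {ψ : (∀ i, Matrix (Fin (d i)) (Fin (d i)) ℂ) →ₐ[ℂ] B}
    (hψ : Function.Injective ψ) {z : B} (hz : z ∈ subCenter ψ.range) (i : Fin m) :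
    ∃ c : ℂ, z * ψ (Pi.single i 1) = c • ψ (Pi.single i 1) := by
  obtain ⟨x, rfl, hx⟩ := exists_central_preimage hψ hz
  obtain ⟨c, hc⟩ := exists_scalar_of_central x hx i
  refine ⟨c, ?_⟩
  rw [← map_mul, ← map_smul]
  congr 1
  ext1 j
  by_cases h : j = i
  · subst h; simp [hc]
  · simp [Pi.single_eq_of_ne h]

end Wedderburn

/-! ### Group algebras of subgroups -/

/-- Maschke's theorem and Wedderburn–Artin for the group algebra of a subgroup. -/
theorem exists_pi_matrix_groupSubalgebra (K : Type) [Group K] [Fintype K] (H : Subgroup K) :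
    ∃ (m : ℕ) (d : Fin m → ℕ) (ψ : (∀ i, Matrix (Fin (d i)) (Fin (d i)) ℂ) →ₐ[ℂ]
      MonoidAlgebra ℂ K), (∀ i, NeZero (d i)) ∧ Function.Injective ψ ∧
        ψ.range = groupSubalgebra K H := by
  classical
  have hr : (MonoidAlgebra.mapDomainAlgHom ℂ ℂ H.subtype).range = groupSubalgebra K H := by
    apply le_antisymm
    · rintro _ ⟨x, rfl⟩
      induction x using MonoidAlgebra.induction_on with
      | of g =>
        refine Algebra.subset_adjoin ⟨g, ?_⟩
        simp
      | add x y hx hy => rw [map_add]; exact add_mem hx hy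
      | smul r x hx => simpa using Subalgebra.smul_mem _ hx r
    · refine Algebra.adjoin_le ?_
      rintro _ ⟨h, rfl⟩
      exact ⟨MonoidAlgebra.of ℂ H h, by simp⟩
  have : NeZero (Nat.card H : ℂ) := ⟨by simp⟩
  have : IsSemisimpleRing (MonoidAlgebra ℂ H) := inferInstance
  have : Module.Finite ℂ (MonoidAlgebra ℂ H) := inferInstance
  obtain ⟨m, d, hd, ⟨φ⟩⟩ :=
    IsSemisimpleRing.exists_algEquiv_pi_matrix_of_isAlgClosed ℂ (MonoidAlgebra ℂ H)
  refine ⟨m, d, (MonoidAlgebra.mapDomainAlgHom ℂ ℂ H.subtype).comp φ.symm.toAlgHom, hd, ?_, ?_⟩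
  · have : Function.Injective (MonoidAlgebra.mapDomainAlgHom ℂ ℂ H.subtype) :=
      MonoidAlgebra.mapDomain_injective H.subtype_injective
    exact this.comp φ.symm.injective
  · rw [← hr]
    ext x
    constructor
    · rintro ⟨y, rfl⟩
      exact ⟨φ.symm y, rfl⟩
    · rintro ⟨y, rfl⟩
      exact ⟨φ y, by simp⟩

theorem central_mul_eq_smul {K : Type} [Group K] [Fintype K] {H : Subgroup K}
    {e z : MonoidAlgebra ℂ K} (he : IsPrimitiveCentralIdempotent (groupSubalgebra K H) e)
    (hz : z ∈ subCenter (groupSubalgebra K H)) : ∃ c : ℂ, z * e = c • e := by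
  obtain ⟨m, d, ψ, hd, hψ, hr⟩ := exists_pi_matrix_groupSubalgebra K H
  rw [← hr] at he hz
  obtain ⟨i, rfl⟩ := exists_eq_single_of_isPrimitiveCentralIdempotent hψ he
  exact exists_central_mul_single_eq_smul hψ hz i

/-- Membership in an additive submonoid can be tested after multiplication by all the products
`e₁ ⋯ eₙ`, as these add up to `1`. -/
theorem mem_of_forall_mul_prod_mem {K : Type} [Group K] [Fintype K]
    (T : AddSubmonoid (MonoidAlgebra ℂ K)) (n : ℕ) (F : Fin n → Subgroup K)
    (a : MonoidAlgebra ℂ K)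
    (h : ∀ e : Fin n → MonoidAlgebra ℂ K,
      (∀ i, IsPrimitiveCentralIdempotent (groupSubalgebra K (F i)) (e i)) →
        a * (List.ofFn e).prod ∈ T) : a ∈ T := by
  induction n generalizing a with
  | zero => simpa using h Fin.elim0 (fun i => Fin.elim0 i)
  | succ n ih =>
    obtain ⟨m, d, ψ, hd, hψ, hr⟩ := exists_pi_matrix_groupSubalgebra K (F 0)
    have h1 : a = ∑ i, a * ψ (Pi.single i 1) := by
      rw [← Finset.mul_sum, ← map_sum]
      have : (∑ i, Pi.single i 1 : ∀ i, Matrix (Fin (d i)) (Fin (d i)) ℂ) = 1 :=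
        Finset.univ_sum_single (1 : ∀ i, Matrix (Fin (d i)) (Fin (d i)) ℂ)
      rw [this, map_one, mul_one]
    rw [h1]
    -- Each `a * pᵢ`, with `pᵢ` primitive for the first group, is tested on the remaining groups.
    refine sum_mem fun i _ => ih (fun j => F j.succ) _ fun e he => ?_
    have hp := isPrimitiveCentralIdempotent_single hψ i
    rw [hr] at hp
    have := h (Fin.cons (ψ (Pi.single i 1)) e) (by
      intro j
      refine Fin.cases ?_ (fun j => ?_) j
      · simpa using hp
      · simpa using he j)
    simpa [List.ofFn_succ, mul_assoc] using this

/-! ### Products of idempotents along a chain -/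

theorem mul_list_prod_eq_smul {B : Type*} [Ring B] [Algebra ℂ B] {z e : B} {c : ℂ} (l : List B)
    (hl : ∀ b ∈ l, z * b = b * z) (he : e ∈ l) (hz : z * e = c • e) :
    z * l.prod = c • l.prod := by
  induction l with
  | nil => simp at he
  | cons b l ih =>
    rw [List.prod_cons]
    rcases List.mem_cons.1 he with rfl | he
    · rw [← mul_assoc, hz, smul_mul_assoc]
    · rw [← mul_assoc, hl b (by simp), mul_assoc,
        ih (fun x hx => hl x (List.mem_cons_of_mem _ hx)) he, mul_smul_comm]

theorem groupSubalgebra_mono {K : Type*} [Group K] {H H' : Subgroup K} (h : H ≤ H') :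
    groupSubalgebra K H ≤ groupSubalgebra K H' := by
  refine Algebra.adjoin_mono ?_
  rintro _ ⟨x, rfl⟩
  exact ⟨⟨x, h x.2⟩, rfl⟩

theorem groupSubalgebra_top (K : Type*) [Group K] : groupSubalgebra K ⊤ = ⊤ := by
  refine Algebra.eq_top_iff.2 fun x => ?_
  induction x using MonoidAlgebra.induction_on with
  | of g => exact Algebra.subset_adjoin ⟨⟨g, trivial⟩, rfl⟩
  | add x y hx hy => exact add_mem hx hy
  | smul r x hx => exact Subalgebra.smul_mem _ hx r

/-- Elements central in two members of a chain of subalgebras commute. -/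
theorem commute_of_chain {K : Type} [Group K] {n : ℕ} {F : Fin n → Subgroup K}
    (hmono : Monotone F) {i j : Fin n} {z w : MonoidAlgebra ℂ K}
    (hz : z ∈ subCenter (groupSubalgebra K (F i))) (hw : w ∈ subCenter (groupSubalgebra K (F j))) :
    z * w = w * z := by
  rcases le_total i j with h | h
  · exact (hw.2 z (groupSubalgebra_mono (hmono h) hz.1)).symm
  · exact hz.2 w (groupSubalgebra_mono (hmono h) hw.1)

/-- A central element of one of the `ℂ[Fᵢ]` multiplies each product `e₁ ⋯ eₙ` by a scalar. -/
theorem central_mul_prod_eq_smul {K : Type} [Group K] [Fintype K] {n : ℕ} {F : Fin n → Subgroup K}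
    (hmono : Monotone F) {i : Fin n} {z : MonoidAlgebra ℂ K} {c : ℂ}
    (hz : z ∈ subCenter (groupSubalgebra K (F i))) (e : Fin n → MonoidAlgebra ℂ K)
    (he : ∀ i, IsPrimitiveCentralIdempotent (groupSubalgebra K (F i)) (e i))
    (hc : z * e i = c • e i) :
    z * (List.ofFn e).prod = c • (List.ofFn e).prod := by
  refine mul_list_prod_eq_smul (e := e i) _ ?_ (List.mem_ofFn.2 ⟨i, rfl⟩) hc
  intro b hb
  obtain ⟨j, rfl⟩ := List.mem_ofFn.1 hb
  exact commute_of_chain hmono hz ⟨(he j).1, (he j).2.2.2.1⟩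

/-! ### From actions on simple modules to identities in `ℂ[K]` -/

/-- If `P` lies in the block of a primitive central idempotent `e` of `ℂ[K]` and `a` acts by a
scalar on the subspace `P V` of each simple module `V` on which `P` is nonzero, then `a * P` is a
multiple of `P`: it suffices to let `V` be the column vectors of the block. -/
theorem mul_eq_smul_of_scalar_action {K : Type} [Group K] [Fintype K] (a P e : MonoidAlgebra ℂ K)
    (he : IsPrimitiveCentralIdempotent (groupSubalgebra K ⊤) e) (hP : e * P = P)
    (h : ∀ (V : Type) [AddCommGroup V] [Module (MonoidAlgebra ℂ K) V],
      IsSimpleModule (MonoidAlgebra ℂ K) V →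
        Set.range (fun v : V => P • v) ≠ {0} →
        ∃ c : ℂ, ∀ v : V, a • (P • v) = algebraMap ℂ (MonoidAlgebra ℂ K) c • (P • v)) :
    ∃ c : ℂ, a * P = c • P := by
  obtain ⟨m, d, ψ, hd, hψ, hr⟩ := exists_pi_matrix_groupSubalgebra K ⊤
  rw [← hr] at he
  obtain ⟨i, rfl⟩ := exists_eq_single_of_isPrimitiveCentralIdempotent hψ he
  rw [groupSubalgebra_top, AlgHom.range_eq_top] at hr
  let φ : MonoidAlgebra ℂ K ≃ₐ[ℂ] (∀ i, Matrix (Fin (d i)) (Fin (d i)) ℂ) :=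
    (AlgEquiv.ofBijective ψ ⟨hψ, hr⟩).symm
  have hφψ : ∀ x, φ (ψ x) = x := fun x => (AlgEquiv.ofBijective ψ ⟨hψ, hr⟩).symm_apply_apply x
  have hφP : ∀ j, j ≠ i → φ P j = 0 := by
    intro j hj
    rw [← hP, map_mul, hφψ]
    simp [Pi.single_eq_of_ne hj]
  let ρ : MonoidAlgebra ℂ K →+* Module.End ℂ (Fin (d i) → ℂ) :=
    (Matrix.toLinAlgEquiv' : Matrix (Fin (d i)) (Fin (d i)) ℂ ≃ₐ[ℂ] _).toRingEquiv.toRingHom.comp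
      ((Pi.evalRingHom _ i).comp φ.toRingEquiv.toRingHom)
  let : Module (MonoidAlgebra ℂ K) (Fin (d i) → ℂ) := Module.compHom _ ρ
  have hsmul : ∀ (x : MonoidAlgebra ℂ K) (v : Fin (d i) → ℂ), x • v = (φ x i).mulVec v :=
    fun x v => rfl
  have hsimple : IsSimpleModule (MonoidAlgebra ℂ K) (Fin (d i) → ℂ) := by
    rw [isSimpleModule_iff_toSpanSingleton_surjective]
    refine ⟨inferInstance, fun w hw v => ?_⟩
    obtain ⟨k, hk⟩ := Function.ne_iff.1 hw
    -- The rank one matrix with column `(w k)⁻¹ • v` in position `k` sends `w` to `v`.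
    refine ⟨ψ (Pi.single i (Matrix.vecMulVec ((w k)⁻¹ • v) (Pi.single k 1))), ?_⟩
    rw [LinearMap.toSpanSingleton_apply, hsmul, hφψ, Pi.single_eq_same]
    have hk' : w k ≠ 0 := hk
    rw [Matrix.vecMulVec_mulVec]
    ext j
    simp
    field_simp
  by_cases h0 : φ P i = 0
  · refine ⟨0, ?_⟩
    have : P = 0 := by
      rw [← map_eq_zero_iff φ φ.injective]
      ext1 j
      by_cases hj : j = i
      · subst hj; exact h0
      · exact hφP j hj
    simp [this]
  · obtain ⟨c, hc⟩ := h (Fin (d i) → ℂ) hsimple (by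
      intro hrange
      apply h0
      apply Matrix.ext_of_mulVec_single
      intro k
      have : P • (Pi.single k 1 : Fin (d i) → ℂ) ∈ ({0} : Set (Fin (d i) → ℂ)) :=
        hrange ▸ Set.mem_range_self _
      rw [Set.mem_singleton_iff, hsmul] at this
      rw [this, Matrix.zero_mulVec])
    refine ⟨c, φ.injective ?_⟩
    ext1 j
    by_cases hj : j = i
    · subst hj
      apply Matrix.ext_of_mulVec_single
      intro k
      have := hc (Pi.single k 1)
      rw [← mul_smul, ← mul_smul, ← Algebra.smul_def, hsmul, hsmul] at this
      exact this
    · simp [hφP j hj]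

/-- Given a chain `F₁ ⊆ ⋯ ⊆ Fₙ = K` of finite groups with multiplicity-free
branching at every step, the set of elements of `ℂ[Fₙ]` acting by a scalar on every nonzero
Gelfand–Tsetlin subspace `p_{λ₁}⋯p_{λₙ}·V` (where `p_{λᵢ}` is a primitive central idempotent
of `ℂ[Fᵢ]`) of every irreducible `Fₙ`-module `V` equals the subalgebra generated by the union
of the centers of `ℂ[F₁], …, ℂ[Fₙ]`. -/
theorem GZ_algebra_eq_scalar_on_GZ_subspaces
    (K : Type) [Group K] [Fintype K] (n : ℕ) (hn : 0 < n)
    (F : Fin n → Subgroup K) (hmono : Monotone F) (htop : F ⟨n - 1, by omega⟩ = ⊤)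
    (hbranch : ∀ (i : Fin n) (hi : (i : ℕ) + 1 < n),
      ∀ (V : Type) [AddCommGroup V] [Module (MonoidAlgebra ℂ (F ⟨(i : ℕ) + 1, hi⟩)) V],
        IsSimpleModule (MonoidAlgebra ℂ (F ⟨(i : ℕ) + 1, hi⟩)) V →
        IsMultiplicityFree
          (groupSubalgebra (F ⟨(i : ℕ) + 1, hi⟩)
            ((F i).subgroupOf (F ⟨(i : ℕ) + 1, hi⟩))) V) :
    {a : MonoidAlgebra ℂ K |
      ∀ (V : Type) [AddCommGroup V] [Module (MonoidAlgebra ℂ K) V],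
        IsSimpleModule (MonoidAlgebra ℂ K) V →
        ∀ e : Fin n → MonoidAlgebra ℂ K,
          (∀ i : Fin n, IsPrimitiveCentralIdempotent (groupSubalgebra K (F i)) (e i)) →
          Set.range (fun v : V => (List.ofFn e).prod • v) ≠ {0} →
          ∃ c : ℂ, ∀ v : V,
            a • ((List.ofFn e).prod • v) =
              algebraMap ℂ (MonoidAlgebra ℂ K) c • ((List.ofFn e).prod • v)} =
    (Algebra.adjoin ℂ (⋃ i : Fin n, subCenter (groupSubalgebra K (F i))) :
      Set (MonoidAlgebra ℂ K)) := by
  ext a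
  constructor
  · intro ha
    refine mem_of_forall_mul_prod_mem
      (Algebra.adjoin ℂ (⋃ i : Fin n, subCenter (groupSubalgebra K (F i)))).toSubmodule.toAddSubmonoid
      n F a fun e he => ?_
    have hcent : ∀ i, e i ∈ subCenter (groupSubalgebra K (F i)) :=
      fun i => ⟨(he i).1, (he i).2.2.2.1⟩
    -- The last idempotent absorbs into the product, which places the product in its block.
    have hP := central_mul_prod_eq_smul hmono (c := 1) (hcent ⟨n - 1, by omega⟩) e he
      (by rw [one_smul]; exact (he _).2.2.1)
    rw [one_smul] at hP
    have hprim := he ⟨n - 1, by omega⟩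
    rw [htop] at hprim
    obtain ⟨c, hc⟩ := mul_eq_smul_of_scalar_action a (List.ofFn e).prod _ hprim hP
      (fun V _ _ hV hne => ha V hV e he hne)
    rw [hc]
    refine Subalgebra.smul_mem _ (list_prod_mem fun x hx => ?_) c
    obtain ⟨j, rfl⟩ := List.mem_ofFn.1 hx
    exact Algebra.subset_adjoin (Set.mem_iUnion.2 ⟨j, hcent j⟩)
  · intro ha V _ _ _ e he _
    have key : ∃ c : ℂ, a * (List.ofFn e).prod = c • (List.ofFn e).prod := by
      induction ha using Algebra.adjoin_induction with
      | mem x hx =>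
        obtain ⟨i, hi⟩ := Set.mem_iUnion.1 hx
        obtain ⟨c, hc⟩ := central_mul_eq_smul (he i) hi
        exact ⟨c, central_mul_prod_eq_smul hmono hi e he hc⟩
      | algebraMap r => exact ⟨r, by rw [Algebra.smul_def]⟩
      | add x y _ _ hx hy =>
        obtain ⟨c, hc⟩ := hx
        obtain ⟨c', hc'⟩ := hy
        exact ⟨c + c', by rw [add_mul, hc, hc', add_smul]⟩
      | mul x y _ _ hx hy =>
        obtain ⟨c, hc⟩ := hx
        obtain ⟨c', hc'⟩ := hy
        exact ⟨c' * c, by rw [mul_assoc, hc', mul_smul_comm, hc, smul_smul]⟩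
    obtain ⟨c, hc⟩ := key
    exact ⟨c, fun v => by rw [← mul_smul, ← mul_smul, hc, Algebra.smul_def]⟩
end

section
/- Let G be a finite group acting on a finite set X such that the permutation representation of G on V(X) is multiplicity free. Let L_0 be a symbol not in X, let B_X(n)_i be the set of n-tuples over X ∪ {L_0} having exactly i coordinates in X, and let the wreath product G≀S_n act on B_X(n)_i by permuting the n coordinates and then acting independently on the coordinates lying in X by elements of G (fixing the coordinates equal to L_0). Then for every 0 ≤ i ≤ n, the permutation representation of G≀S_n on V(B_X(n)_i) is multiplicity free. -/
/-!
For a finite group `K` acting on a finite set `S`, Maschke's theorem and Schur's lemma show that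
`V(S)` is multiplicity free exactly when its endomorphisms commute, that is, when the `K`-invariant
kernels `S × S → ℂ` commute as matrices (`isMultiplicityFree_permModule_iff`). The theorem is
thereby reduced to commutativity of invariant kernels, proved by a Gelfand-type trick.

Let the invariant kernels on `X` commute. Then `G` is transitive on `X`, and every invariant kernel
has equal row and column sums. Let `σ` act on pairs of letters of `X ∪ {L₀}` by fixing `(a, b)` when
both letters lie in `X` and sending it to `(b, a)` otherwise; `σ (a, b) = (mix a b, mix b a)`.

* Pulling back along `σ` reverses products of `G`-invariant kernels on `X ∪ {L₀}`
  (`KernelsCommute.mix_mul`). A `Gⁿ`-invariant kernel on tuples is a combination of products of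
  such kernels, so the coordinatewise pullback reverses products of `Gⁿ`-invariant kernels
  (`KernelsCommute.mix_mul_tuple`).
* If two tuples have the same number of letters in `X`, then coordinatewise `σ` keeps the pair in
  its `G ≀ Sₙ`-orbit (`KernelsCommute.exists_smul_eq_mix`), so invariant kernels on tuples of fixed
  weight are unchanged by the pullback.

A product-reversing map that fixes every invariant kernel forces them to commute
(`KernelsCommute.jTuple`).
-/

/-- The action of `Equiv.Perm (Fin n)` on `Fin n → G` by permuting coordinates. -/
def wreathHom (G : Type*) [Group G] (n : ℕ) : Equiv.Perm (Fin n) →* MulAut (Fin n → G) where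
  toFun π := MulEquiv.arrowCongr π (MulEquiv.refl G)
  map_one' := by ext f i; rfl
  map_mul' := by intro π σ; ext f i; rfl

/-- The wreath product `G ≀ Sₙ`. -/
abbrev WreathProduct (G : Type*) [Group G] (n : ℕ) :=
  SemidirectProduct (Fin n → G) (Equiv.Perm (Fin n)) (wreathHom G n)

/-- Tuples of length `n` over the alphabet `X ∪ {L₀}` (`L₀` = `none`) with exactly `i`
coordinates lying in `X`. -/
def JTuple (X : Type*) (n i : ℕ) : Type _ :=
  {a : Fin n → Option X // (Finset.univ.filter fun j => (a j).isSome).card = i}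

/-- The action of `G ≀ Sₙ` on such tuples: permute the coordinates, then act on the nonzero
letters coordinatewise by elements of `G`. -/
instance {G : Type*} [Group G] {X : Type*} [MulAction G X] {n i : ℕ} :
    MulAction (WreathProduct G n) (JTuple X n i) where
  smul w a := ⟨fun j => Option.map (fun x => w.left j • x) (a.1 (w.right⁻¹ j)), by
    have h1 : (Finset.univ.filter fun j =>
        (Option.map (fun x => w.left j • x) (a.1 (w.right⁻¹ j))).isSome) =
        Finset.univ.filter fun j => (a.1 (w.right⁻¹ j)).isSome := by
      apply Finset.filter_congr; intro j _; simp
    have h2 : (Finset.univ.filter fun j => (a.1 (w.right⁻¹ j)).isSome) =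
        Finset.map w.right.toEmbedding (Finset.univ.filter fun j => (a.1 j).isSome) := by
      ext j
      simp only [Finset.mem_map_equiv, Finset.mem_filter, Finset.mem_univ, true_and]
      rfl
    rw [h1, h2, Finset.card_map, a.2]⟩
  one_smul a := by
    apply Subtype.ext; funext j
    show Option.map (fun x => (1 : WreathProduct G n).left j • x)
        (a.1 ((1 : WreathProduct G n).right⁻¹ j)) = a.1 j
    cases h : a.1 j <;> simp_all [SemidirectProduct.one_left, SemidirectProduct.one_right]
  mul_smul w u a := by
    apply Subtype.ext; funext j
    show Option.map (fun x => (w * u).left j • x) (a.1 ((w * u).right⁻¹ j)) =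
      Option.map (fun x => w.left j • x)
        (Option.map (fun x => u.left (w.right⁻¹ j) • x) (a.1 (u.right⁻¹ (w.right⁻¹ j))))
    rw [Option.map_map]
    have hr : (w * u).right⁻¹ j = u.right⁻¹ (w.right⁻¹ j) := by
      simp [SemidirectProduct.mul_right]
    rw [hr]
    cases a.1 (u.right⁻¹ (w.right⁻¹ j)) <;>
      simp [SemidirectProduct.mul_left, wreathHom, mul_smul, Function.comp, Equiv.Perm.inv_def]

/-- The permutation module of a group `K` acting on a set `S`, over the group algebra. -/
noncomputable def permModule (K : Type*) [Monoid K] (S : Type*) [MulAction K S] : Type _ :=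
  (Representation.ofMulAction ℂ K S).asModule

noncomputable instance (K : Type*) [Monoid K] (S : Type*) [MulAction K S] :
    AddCommGroup (permModule K S) :=
  inferInstanceAs (AddCommGroup (Representation.ofMulAction ℂ K S).asModule)

noncomputable instance (K : Type*) [Monoid K] (S : Type*) [MulAction K S] :
    Module (MonoidAlgebra ℂ K) (permModule K S) :=
  inferInstanceAs (Module (MonoidAlgebra ℂ K) (Representation.ofMulAction ℂ K S).asModule)

/-! ### Multiplicity freeness and commuting endomorphisms -/

section Schur

variable {A V : Type*} [Ring A] [AddCommGroup V] [Module A V] [IsSemisimpleModule A V]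

/-- Every endomorphism maps each simple submodule into itself, and Schur's lemma makes it a scalar
there; the simple submodules span. -/
theorem IsMultiplicityFree.comp_comm {F : Type*} [Field F] [IsAlgClosed F] [Algebra F A]
    [Module F V] [IsScalarTower F A V] [FiniteDimensional F V]
    (h : IsMultiplicityFree A V) (f g : V →ₗ[A] V) : f ∘ₗ g = g ∘ₗ f := by
  have scalar : ∀ (S : Submodule A V), IsSimpleModule A S → ∀ f : V →ₗ[A] V,
      ∃ c : F, ∀ v ∈ S, f v = c • v := by
    intro S hS f
    have hmaps : ∀ v ∈ S, f v ∈ S := by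
      rcases LinearMap.injective_or_eq_zero (f ∘ₗ S.subtype) with hi | h0
      · let e := LinearEquiv.ofInjective (f ∘ₗ S.subtype) hi
        have hsimple : IsSimpleModule A (LinearMap.range (f ∘ₗ S.subtype)) :=
          IsSimpleModule.congr e.symm
        have heq := h S _ hS hsimple ⟨e⟩
        intro v hv
        rw [heq]
        exact ⟨⟨v, hv⟩, rfl⟩
      · intro v hv
        have : f v = 0 := LinearMap.congr_fun h0 ⟨v, hv⟩
        rw [this]; exact S.zero_mem
    have : FiniteDimensional F S :=
      Module.Finite.of_injective (S.subtype.restrictScalars F) S.injective_subtype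
    obtain ⟨c, hc⟩ := (IsSimpleModule.algebraMap_end_bijective_of_isAlgClosed (A := A) (V := S)
      F).2 (f.restrict hmaps)
    refine ⟨c, fun v hv => ?_⟩
    have := congrArg Subtype.val (LinearMap.congr_fun hc ⟨v, hv⟩)
    exact this.symm
  have htop : (⊤ : Submodule A V) ≤ LinearMap.eqLocus (f ∘ₗ g) (g ∘ₗ f) := by
    rw [← IsSemisimpleModule.sSup_simples_eq_top A V]
    refine sSup_le fun S hS v hv => ?_
    obtain ⟨a, ha⟩ := scalar S hS f
    obtain ⟨b, hb⟩ := scalar S hS g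
    have hfa : ∀ c : F, c • v ∈ S := fun c => by
      rw [← algebraMap_smul A c v]; exact S.smul_mem _ hv
    show f (g v) = g (f v)
    rw [hb v hv, ha v hv, ha _ (hfa b), hb _ (hfa a), smul_comm]
  exact LinearMap.ext fun v => htop (Submodule.mem_top (x := v))

/-- If `S ≃ T` are simple and `p` is a projection onto `S`, then `p` commutes with
`V → S ≃ T ⊆ V` only when `T ≤ S`. -/
theorem isMultiplicityFree_of_comp_comm
    (h : ∀ f g : V →ₗ[A] V, f ∘ₗ g = g ∘ₗ f) : IsMultiplicityFree A V := by
  have key : ∀ S T : Submodule A V, (S ≃ₗ[A] T) → T ≤ S := by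
    intro S T φ
    obtain ⟨S', hS'⟩ := exists_isCompl S
    let p := S.projectionOnto S' hS'
    intro t ht
    have h1 := LinearMap.congr_fun (h (T.subtype ∘ₗ φ.toLinearMap ∘ₗ p) (S.subtype ∘ₗ p))
      (φ.symm ⟨t, ht⟩ : S)
    have h2 : p ((φ.symm ⟨t, ht⟩ : S) : V) = φ.symm ⟨t, ht⟩ :=
      Submodule.projectionOnto_apply_left hS' _
    simp only [LinearMap.comp_apply, Submodule.subtype_apply, h2, LinearEquiv.coe_coe,
      LinearEquiv.apply_symm_apply] at h1
    rw [h1]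
    exact Subtype.property _
  rintro S T - - ⟨φ⟩
  exact le_antisymm (key T S φ.symm) (key S T φ)

end Schur

/-! ### Permutation modules and invariant kernels -/

/-- A kernel (matrix) on `S` that is constant on the diagonal `K`-orbits of `S × S`. -/
def InvKernel (K : Type*) {S : Type*} [Group K] [MulAction K S] (M : S → S → ℂ) : Prop :=
  ∀ (g : K) (a b : S), M (g • a) (g • b) = M a b

/-- Any two invariant kernels on `S` commute as matrices. -/
def KernelsCommute (K S : Type*) [Group K] [Fintype S] [MulAction K S] : Prop :=
  ∀ M N : S → S → ℂ, InvKernel K M → InvKernel K N →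
    ∀ a b, ∑ c, M a c * N c b = ∑ c, N a c * M c b

section Perm

variable {K S : Type*} [Group K] [Fintype S] [MulAction K S]

noncomputable instance : Module ℂ (permModule K S) :=
  inferInstanceAs (Module ℂ (Representation.ofMulAction ℂ K S).asModule)

instance : IsScalarTower ℂ (MonoidAlgebra ℂ K) (permModule K S) :=
  inferInstanceAs (IsScalarTower ℂ (MonoidAlgebra ℂ K)
    (Representation.ofMulAction ℂ K S).asModule)

instance [Finite K] : IsSemisimpleModule (MonoidAlgebra ℂ K) (permModule K S) := by
  have : NeZero (Nat.card K : ℂ) := ⟨Nat.cast_ne_zero.2 Nat.card_pos.ne'⟩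
  infer_instance

/-- The permutation module as the space of functions on `S`. -/
noncomputable def permEquiv : permModule K S ≃ₗ[ℂ] (S → ℂ) :=
  ((Representation.ofMulAction ℂ K S).asModuleEquiv.trans
    (MonoidAlgebra.coeffLinearEquiv ℂ)).trans (Finsupp.linearEquivFunOnFinite ℂ ℂ S)

theorem permEquiv_single_smul (g : K) (v : permModule K S) (a : S) :
    permEquiv ((MonoidAlgebra.single g (1 : ℂ) : MonoidAlgebra ℂ K) • v) a
      = permEquiv v (g⁻¹ • a) := by
  have h := Representation.single_smul (ρ := Representation.ofMulAction ℂ K S) 1 g v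
  rw [one_smul] at h
  have h2 := Representation.coeff_ofMulAction (k := ℂ) g
    ((Representation.ofMulAction ℂ K S).asModuleEquiv v) a
  exact (congrArg (fun w => permEquiv (K := K) w a) h).trans h2

instance : FiniteDimensional ℂ (permModule K S) := Module.Finite.equiv permEquiv.symm

open Matrix in
theorem isMultiplicityFree_permModule_iff [Finite K] :
    IsMultiplicityFree (MonoidAlgebra ℂ K) (permModule K S) ↔ KernelsCommute K S := by
  classical
  constructor
  · intro h M N hM hN a b
    -- the endomorphism attached to an invariant kernel
    have ex : ∀ M : S → S → ℂ, InvKernel K M →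
        ∃ f : permModule K S →ₗ[MonoidAlgebra ℂ K] permModule K S,
          ∀ v, permEquiv (f v) = (Matrix.of M) *ᵥ permEquiv v := by
      intro M hM
      let f : permModule K S →ₗ[ℂ] permModule K S :=
        permEquiv.symm.toLinearMap ∘ₗ Matrix.toLin' (Matrix.of M) ∘ₗ permEquiv.toLinearMap
      have hf : ∀ v, permEquiv (f v) = (Matrix.of M) *ᵥ permEquiv v := by
        intro v; simp [f]
      refine ⟨MonoidAlgebra.equivariantOfLinearOfComm f ?_, hf⟩
      intro g v
      apply permEquiv.injective
      ext a
      rw [permEquiv_single_smul, hf, hf]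
      simp only [Matrix.mulVec, dotProduct, Matrix.of_apply, permEquiv_single_smul]
      refine Fintype.sum_equiv (MulAction.toPerm g⁻¹) _ _ fun c => ?_
      rw [MulAction.toPerm_apply, hM]
    obtain ⟨f, hf⟩ := ex M hM
    obtain ⟨g, hg⟩ := ex N hN
    have hc := LinearMap.congr_fun (h.comp_comm (F := ℂ) f g)
      (permEquiv.symm (Pi.single b 1))
    have hc2 := congrFun (congrArg permEquiv hc) a
    simpa [hf, hg, Matrix.mulVec, dotProduct, Pi.single_apply] using hc2
  · intro h
    refine isMultiplicityFree_of_comp_comm fun f g => ?_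
    let m : (permModule K S →ₗ[MonoidAlgebra ℂ K] permModule K S) → Matrix S S ℂ := fun f =>
      LinearMap.toMatrix' (permEquiv.toLinearMap ∘ₗ f.restrictScalars ℂ ∘ₗ
        permEquiv.symm.toLinearMap)
    have hm : ∀ f v, permEquiv (f v) = m f *ᵥ permEquiv v := by
      intro f v
      simp [m, LinearMap.toMatrix'_mulVec]
    have hinv : ∀ f, InvKernel K (m f) := by
      intro f s a b
      have e : ∀ (a b : S), m f a b = permEquiv (f (permEquiv.symm (Pi.single b 1))) a := by
        intro a b; simp [m, LinearMap.toMatrix'_apply]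
      have e2 : permEquiv.symm (Pi.single (s • b) (1 : ℂ)) =
          (MonoidAlgebra.single s (1 : ℂ) : MonoidAlgebra ℂ K) •
            (permEquiv.symm (Pi.single b (1 : ℂ)) : permModule K S) := by
        apply permEquiv.injective
        ext c
        rw [permEquiv_single_smul]
        simp [Pi.single_apply, inv_smul_eq_iff]
      rw [e, e, e2, map_smul, permEquiv_single_smul, inv_smul_smul]
    have hcomm : m f * m g = m g * m f := by
      ext a b
      exact h _ _ (hinv f) (hinv g) a b
    apply LinearMap.ext
    intro v
    apply permEquiv.injective
    show permEquiv (f (g v)) = permEquiv (g (f v))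
    rw [hm, hm, hm, hm, Matrix.mulVec_mulVec, Matrix.mulVec_mulVec, hcomm]

end Perm

/-! ### Kernels on one coordinate -/

section OneCoordinate

variable {G X : Type*} [Group G] [MulAction G X]

/-- Commuting with the all-ones kernel forces invariant functions to be constant. -/
theorem KernelsCommute.const [Fintype X] (h : KernelsCommute G X) {f : X → ℂ}
    (hf : ∀ (g : G) x, f (g • x) = f x) (x y : X) : f x = f y := by
  have key : ∀ z, (Fintype.card X : ℂ) * f z = ∑ c, f c := by
    intro z
    simpa using h (fun a _ => f a) (fun _ _ => 1) (fun g a b => hf g a) (fun _ _ _ => rfl) z z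
  have hne : (Fintype.card X : ℂ) ≠ 0 :=
    Nat.cast_ne_zero.2 (Fintype.card_pos_iff.2 ⟨x⟩).ne'
  exact mul_left_cancel₀ hne ((key x).trans (key y).symm)

theorem KernelsCommute.exists_smul_eq [Fintype X] (h : KernelsCommute G X) (x y : X) :
    ∃ g : G, g • x = y := by
  classical
  have h1 := h.const (f := fun z => if z ∈ MulAction.orbit G x then (1 : ℂ) else 0)
    (fun g z => by rw [MulAction.mem_orbit_symm, MulAction.orbit_smul, MulAction.mem_orbit_symm])
    x y
  by_contra hy
  have hy' : y ∉ MulAction.orbit G x := fun hm => hy hm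
  simp [hy'] at h1

theorem KernelsCommute.sum_row_eq_sum_col [Fintype X] (h : KernelsCommute G X) {k : X → X → ℂ}
    (hk : InvKernel G k) (x y : X) : ∑ z, k x z = ∑ z, k z y := by
  simpa using h k (fun _ _ => 1) hk (fun _ _ _ => rfl) x y

/-- The pair `(mix a b, mix b a)` equals `(a, b)` if both letters lie in `X`, and equals `(b, a)`
otherwise. -/
def mix : Option X → Option X → Option X
  | some x, some _ => some x
  | none, b => b
  | some _, none => none

theorem isSome_mix (a b : Option X) : (mix a b).isSome = b.isSome := by
  cases a <;> cases b <;> rfl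

/-- On `X ∪ {L₀}`, the map `k ↦ ((a, b) ↦ k (mix a b) (mix b a))` reverses products of invariant
kernels: it is the identity on the commutative algebra of invariant kernels on `X`, and transposes
the constant row and column belonging to `L₀`. -/
theorem KernelsCommute.mix_mul [Fintype X] (h : KernelsCommute G X) {k l : Option X → Option X → ℂ}
    (hk : InvKernel G k) (hl : InvKernel G l) (a b : Option X) :
    ∑ c, k (mix a b) c * l c (mix b a) =
      ∑ c, l (mix a c) (mix c a) * k (mix c b) (mix b c) := by
  have row : ∀ {m : Option X → Option X → ℂ}, InvKernel G m → ∀ x y : X,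
      m none (some x) = m none (some y) := fun {m} hm x y =>
    h.const (f := fun x => m none (some x)) (fun g x => hm g none (some x)) x y
  have col : ∀ {m : Option X → Option X → ℂ}, InvKernel G m → ∀ x y : X,
      m (some x) none = m (some y) none := fun {m} hm x y =>
    h.const (f := fun x => m (some x) none) (fun g x => hm g (some x) none) x y
  have core : ∀ {m : Option X → Option X → ℂ}, InvKernel G m →
      InvKernel G (fun x y : X => m (some x) (some y)) := fun {m} hm g x y =>
    hm g (some x) (some y)
  rcases a with _ | x <;> rcases b with _ | y <;> simp only [Fintype.sum_option, mix]
  · congr 1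
    · ring
    · exact Finset.sum_congr rfl fun _ _ => mul_comm _ _
  · simp only [fun z => col hl z y, ← Finset.sum_mul, ← Finset.mul_sum]
    have e := h.sum_row_eq_sum_col (core hk) y y
    linear_combination l (some y) none * e
  · simp only [fun z => row hk z x, ← Finset.sum_mul, ← Finset.mul_sum]
    have e := h.sum_row_eq_sum_col (core hl) x x
    linear_combination -k none (some x) * e
  · rw [h _ _ (core hk) (core hl) x y, col hk x y, row hl y x, mul_comm (k _ _)]

end OneCoordinate

/-! ### Kernels on tuples -/

section Tensor

variable {G X : Type*} [Group G] [Fintype G] [Fintype X] [MulAction G X] {n : ℕ}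

open Classical in
/-- The number of `g` carrying `(a, b)` to `(p, q)`: up to a scalar, the average over `G` of the
elementary kernel supported at `(p, q)`. -/
noncomputable def orbKernel (G : Type*) {X : Type*} [Group G] [Fintype G] [MulAction G X]
    (p q a b : Option X) : ℂ :=
  ∑ g : G, if p = g • a ∧ q = g • b then 1 else 0

theorem invKernel_orbKernel (p q : Option X) : InvKernel G (orbKernel G p q) := by
  intro g a b
  unfold orbKernel
  refine Fintype.sum_equiv (Equiv.mulRight g) _ _ fun s => ?_
  have e : ∀ o : Option X, (s * g) • o = s • g • o := fun o => mul_smul s g o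
  by_cases h : p = (s * g) • a ∧ q = (s * g) • b
  · exact (if_pos (by rw [e, e] at h; exact h)).trans (if_pos h).symm
  · exact (if_neg (by rw [e, e] at h; exact h)).trans (if_neg h).symm

/-- A kernel on tuples invariant under `Gⁿ` is a combination of products of `G`-invariant
one-coordinate kernels. -/
theorem eq_sum_prod_orbKernel {P : (Fin n → Option X) → (Fin n → Option X) → ℂ}
    (hP : ∀ (g : Fin n → G) a b, P (fun j => g j • a j) (fun j => g j • b j) = P a b)
    (a b : Fin n → Option X) :
    P a b = ∑ t : (Fin n → Option X) × (Fin n → Option X),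
      ((Fintype.card (Fin n → G) : ℂ)⁻¹ * P t.1 t.2) *
        ∏ j, orbKernel G (t.1 j) (t.2 j) (a j) (b j) := by
  classical
  have hne : (Fintype.card (Fin n → G) : ℂ) ≠ 0 := Nat.cast_ne_zero.2 Fintype.card_ne_zero
  have h1 : ∀ t : (Fin n → Option X) × (Fin n → Option X),
      ∏ j, orbKernel G (t.1 j) (t.2 j) (a j) (b j) =
        ∑ g : Fin n → G, if t = (fun j => g j • a j, fun j => g j • b j) then (1 : ℂ) else 0 := by
    intro t
    unfold orbKernel
    rw [Finset.prod_univ_sum, Fintype.piFinset_univ]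
    refine Finset.sum_congr rfl fun g _ => ?_
    rw [Finset.prod_ite_zero]
    simp [Prod.ext_iff, funext_iff, forall_and]
  simp only [h1, mul_assoc, ← Finset.mul_sum]
  rw [eq_inv_mul_iff_mul_eq₀ hne]
  simp only [Finset.mul_sum, mul_ite, mul_one, mul_zero]
  rw [Finset.sum_comm]
  simp [hP]

theorem sum_mul_sum_bilinear {ι γ : Type*} [Fintype ι] [Fintype γ] (α β : ι → ℂ)
    (x y : ι → γ → ℂ) :
    ∑ c, (∑ t, α t * x t c) * (∑ s, β s * y s c) =
      ∑ t, ∑ s, α t * β s * ∑ c, x t c * y s c := by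
  simp only [Finset.sum_mul_sum]
  rw [Finset.sum_comm]
  refine Finset.sum_congr rfl fun t _ => ?_
  rw [Finset.sum_comm]
  refine Finset.sum_congr rfl fun s _ => ?_
  rw [Finset.mul_sum]
  exact Finset.sum_congr rfl fun c _ => by ring

/-- Coordinatewise `mix` reverses products of `Gⁿ`-invariant kernels on tuples. -/
theorem KernelsCommute.mix_mul_tuple (h : KernelsCommute G X)
    {P Q : (Fin n → Option X) → (Fin n → Option X) → ℂ}
    (hP : ∀ (g : Fin n → G) a b, P (fun j => g j • a j) (fun j => g j • b j) = P a b)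
    (hQ : ∀ (g : Fin n → G) a b, Q (fun j => g j • a j) (fun j => g j • b j) = Q a b)
    (a b : Fin n → Option X) :
    ∑ c : Fin n → Option X, P (fun j => mix (a j) (b j)) c * Q c (fun j => mix (b j) (a j)) =
      ∑ c : Fin n → Option X, Q (fun j => mix (a j) (c j)) (fun j => mix (c j) (a j)) *
        P (fun j => mix (c j) (b j)) (fun j => mix (b j) (c j)) := by
  classical
  obtain ⟨α, hα⟩ : ∃ α : (Fin n → Option X) × (Fin n → Option X) → ℂ, ∀ a b, P a b =
      ∑ t, α t * ∏ j, orbKernel G (t.1 j) (t.2 j) (a j) (b j) :=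
    ⟨_, eq_sum_prod_orbKernel hP⟩
  obtain ⟨β, hβ⟩ : ∃ β : (Fin n → Option X) × (Fin n → Option X) → ℂ, ∀ a b, Q a b =
      ∑ t, β t * ∏ j, orbKernel G (t.1 j) (t.2 j) (a j) (b j) :=
    ⟨_, eq_sum_prod_orbKernel hQ⟩
  have hl : ∀ t s : (Fin n → Option X) × (Fin n → Option X),
      ∑ c : Fin n → Option X, (∏ j, orbKernel G (t.1 j) (t.2 j) (mix (a j) (b j)) (c j)) *
          ∏ j, orbKernel G (s.1 j) (s.2 j) (c j) (mix (b j) (a j)) =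
        ∑ c : Fin n → Option X,
          (∏ j, orbKernel G (s.1 j) (s.2 j) (mix (a j) (c j)) (mix (c j) (a j))) *
          ∏ j, orbKernel G (t.1 j) (t.2 j) (mix (c j) (b j)) (mix (b j) (c j)) := by
    intro t s
    simp only [← Finset.prod_mul_distrib]
    have e := fun F : Fin n → Option X → ℂ =>
      Finset.prod_univ_sum (fun _ : Fin n => (Finset.univ : Finset (Option X))) F
    simp only [Fintype.piFinset_univ] at e
    rw [← e (fun j c => orbKernel G (t.1 j) (t.2 j) (mix (a j) (b j)) c *
        orbKernel G (s.1 j) (s.2 j) c (mix (b j) (a j))),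
      ← e (fun j c => orbKernel G (s.1 j) (s.2 j) (mix (a j) c) (mix c (a j)) *
        orbKernel G (t.1 j) (t.2 j) (mix c (b j)) (mix (b j) c))]
    exact Finset.prod_congr rfl fun j _ =>
      h.mix_mul (invKernel_orbKernel _ _) (invKernel_orbKernel _ _) _ _
  simp only [hα, hβ]
  rw [sum_mul_sum_bilinear, sum_mul_sum_bilinear, Finset.sum_comm]
  refine Finset.sum_congr rfl fun s _ => Finset.sum_congr rfl fun t _ => ?_
  rw [hl t s, mul_comm (α t)]

end Tensor

/-! ### The orbit argument -/

section Orbit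

/-- Disjoint sets of the same size are interchanged by an involution fixing everything else. -/
theorem exists_involution {α : Type*} [DecidableEq α] {p q : Finset α} (hd : Disjoint p q)
    (hc : p.card = q.card) : ∃ π : Equiv.Perm α, π⁻¹ = π ∧ (∀ j ∈ p, π j ∈ q) ∧
      (∀ j ∈ q, π j ∈ p) ∧ ∀ j, j ∉ p → j ∉ q → π j = j := by
  let e : p ≃ q := Finset.equivOfCardEq hc
  let f : α → α := fun j =>
    if h : j ∈ p then e ⟨j, h⟩ else if h : j ∈ q then e.symm ⟨j, h⟩ else j
  have hp : ∀ j (h : j ∈ p), f j = e ⟨j, h⟩ := fun j h => by simp [f, h]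
  have hq : ∀ j (h : j ∈ q), f j = e.symm ⟨j, h⟩ := fun j h => by
    simp [f, h, Finset.disjoint_right.1 hd h]
  have hn : ∀ j, j ∉ p → j ∉ q → f j = j := fun j h1 h2 => by simp [f, h1, h2]
  have hf : Function.Involutive f := by
    intro j
    by_cases h1 : j ∈ p
    · rw [hp j h1, hq _ (e ⟨j, h1⟩).2]; simp
    · by_cases h2 : j ∈ q
      · rw [hq j h2, hp _ (e.symm ⟨j, h2⟩).2]; simp
      · rw [hn j h1 h2, hn j h1 h2]
  refine ⟨hf.toPerm f, rfl, fun j h => ?_, fun j h => ?_, hn⟩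
  · show f j ∈ q
    rw [hp j h]; exact Subtype.property _
  · show f j ∈ p
    rw [hq j h]; exact Subtype.property _

variable {G X : Type*} [Group G] [MulAction G X] {n i : ℕ}

/-- Coordinatewise `mix` of two tuples of the same weight. -/
def JTuple.mix (A B : JTuple X n i) : JTuple X n i :=
  ⟨fun j => _root_.mix (A.1 j) (B.1 j), by simp only [isSome_mix]; exact B.2⟩

/-- The pairs `(A, B)` and `(mix A B, mix B A)` lie in one orbit: equality of weights gives as many
coordinates with only `A` in `X` as with only `B` in `X`, so a permutation can interchange them,
and transitivity of `G` on `X` adjusts the letters. -/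
theorem KernelsCommute.exists_smul_eq_mix [Fintype X] (h : KernelsCommute G X) (A B : JTuple X n i) :
    ∃ w : WreathProduct G n, w • A = A.mix B ∧ w • B = B.mix A := by
  let p := Finset.univ.filter fun j => (A.1 j).isSome ∧ ¬ (B.1 j).isSome
  let q := Finset.univ.filter fun j => (B.1 j).isSome ∧ ¬ (A.1 j).isSome
  have hd : Disjoint p q := by
    rw [Finset.disjoint_left]; simp +contextual [p, q]
  have hcard : p.card = q.card := by
    have hA := A.2
    have hB := B.2
    rw [← Finset.card_filter_add_card_filter_not (fun j => (B.1 j).isSome = true),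
      Finset.filter_filter, Finset.filter_filter] at hA
    rw [← Finset.card_filter_add_card_filter_not (fun j => (A.1 j).isSome = true),
      Finset.filter_filter, Finset.filter_filter] at hB
    have hAB : (Finset.univ.filter fun j => (B.1 j).isSome = true ∧ (A.1 j).isSome = true) =
        Finset.univ.filter fun j => (A.1 j).isSome = true ∧ (B.1 j).isSome = true :=
      Finset.filter_congr fun j _ => and_comm
    rw [hAB] at hB
    exact Nat.add_left_cancel (hA.trans hB.symm)
  obtain ⟨π, hinv, hpq, hqp, hfix⟩ := exists_involution hd hcard
  have hg : ∀ j, ∃ g : G, Option.map (g • ·) (A.1 (π j)) = _root_.mix (A.1 j) (B.1 j) ∧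
      Option.map (g • ·) (B.1 (π j)) = _root_.mix (B.1 j) (A.1 j) := by
    intro j
    have hjp := hpq j
    have hjq := hqp j
    have hjf := hfix j
    simp only [p, q, Finset.mem_filter, Finset.mem_univ, true_and] at hjp hjq hjf
    rcases ha : A.1 j with _ | x <;> rcases hb : B.1 j with _ | y <;>
      simp only [ha, hb, Option.isSome_none, Option.isSome_some] at hjp hjq hjf
    · rw [hjf (by simp) (by simp)]
      exact ⟨1, by simp [ha, hb, _root_.mix]⟩
    · obtain ⟨h1, h2⟩ := hjq (by simp)
      obtain ⟨z, hz⟩ := Option.isSome_iff_exists.1 h1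
      obtain ⟨g, hg⟩ := h.exists_smul_eq z y
      exact ⟨g, by simp [hz, hg, _root_.mix], by simpa [_root_.mix] using h2⟩
    · obtain ⟨h1, h2⟩ := hjp (by simp)
      obtain ⟨z, hz⟩ := Option.isSome_iff_exists.1 h1
      obtain ⟨g, hg⟩ := h.exists_smul_eq z x
      exact ⟨g, by simpa [_root_.mix] using h2, by simp [hz, hg, _root_.mix]⟩
    · rw [hjf (by simp) (by simp)]
      exact ⟨1, by simp [ha, hb, _root_.mix]⟩
  choose g hg1 hg2 using hg
  refine ⟨⟨g, π⟩, Subtype.ext (funext fun j => ?_), Subtype.ext (funext fun j => ?_)⟩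
  · show Option.map (g j • ·) (A.1 (π⁻¹ j)) = _
    rw [hinv]; exact hg1 j
  · show Option.map (g j • ·) (B.1 (π⁻¹ j)) = _
    rw [hinv]; exact hg2 j

end Orbit

/-! ### Commutativity of the invariant kernels on tuples of given weight -/

section Final

variable {G X : Type*} [Group G] [MulAction G X] {n i : ℕ}

noncomputable instance [Fintype X] : Fintype (JTuple X n i) :=
  inferInstanceAs (Fintype {a : Fin n → Option X //
    (Finset.univ.filter fun j => (a j).isSome).card = i})

/-- A kernel on tuples of weight `i`, extended by zero to all tuples. -/
def extendKernel (M : JTuple X n i → JTuple X n i → ℂ) (a b : Fin n → Option X) : ℂ :=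
  if h : (Finset.univ.filter fun j => (a j).isSome).card = i ∧
      (Finset.univ.filter fun j => (b j).isSome).card = i then M ⟨a, h.1⟩ ⟨b, h.2⟩ else 0

theorem extendKernel_val (M : JTuple X n i → JTuple X n i → ℂ) (A B : JTuple X n i) :
    extendKernel M A.1 B.1 = M A B := dif_pos ⟨A.2, B.2⟩

theorem extendKernel_smul {M : JTuple X n i → JTuple X n i → ℂ}
    (hM : InvKernel (WreathProduct G n) M) (g : Fin n → G) (a b : Fin n → Option X) :
    extendKernel M (fun j => g j • a j) (fun j => g j • b j) = extendKernel M a b := by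
  have hs : ∀ (j : Fin n) (o : Option X), (g j • o).isSome = o.isSome := fun j o => by
    cases o <;> rfl
  by_cases h : (Finset.univ.filter fun j => (a j).isSome).card = i ∧
      (Finset.univ.filter fun j => (b j).isSome).card = i
  · let w : WreathProduct G n := ⟨g, 1⟩
    let A : JTuple X n i := ⟨a, h.1⟩
    let B : JTuple X n i := ⟨b, h.2⟩
    exact (extendKernel_val M (w • A) (w • B)).trans
      ((hM w A B).trans (extendKernel_val M A B).symm)
  · rw [extendKernel, extendKernel, dif_neg h, dif_neg (by simpa only [hs] using h)]

theorem sum_jTuple [Fintype X] {F : (Fin n → Option X) → ℂ}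
    (hF : ∀ c, (Finset.univ.filter fun j => (c j).isSome).card ≠ i → F c = 0) :
    ∑ c, F c = ∑ C : JTuple X n i, F C.1 := by
  rw [← Finset.sum_subset (Finset.subset_univ (Finset.univ.filter fun c : Fin n → Option X =>
    (Finset.univ.filter fun j => (c j).isSome).card = i)) fun c _ hc => hF c (by simpa using hc)]
  exact Finset.sum_subtype _ (by simp) _

theorem KernelsCommute.jTuple [Fintype G] [Fintype X] (h : KernelsCommute G X) :
    KernelsCommute (WreathProduct G n) (JTuple X n i) := by
  intro M N hM hN A B
  have hmix : ∀ {L : JTuple X n i → JTuple X n i → ℂ}, InvKernel (WreathProduct G n) L →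
      ∀ A B, L (A.mix B) (B.mix A) = L A B := by
    intro L hL A B
    obtain ⟨w, h1, h2⟩ := h.exists_smul_eq_mix A B
    rw [← h1, ← h2, hL]
  have hMN : InvKernel (WreathProduct G n) (fun A B => ∑ C, M A C * N C B) := by
    intro w A B
    refine (Fintype.sum_equiv (MulAction.toPerm w) _ _ fun C => ?_).symm
    rw [MulAction.toPerm_apply, hM, hN]
  have key := h.mix_mul_tuple (extendKernel_smul hM) (extendKernel_smul hN) A.1 B.1
  rw [sum_jTuple (i := i), sum_jTuple (i := i)] at key
  · calc ∑ C, M A C * N C B = ∑ C, M (A.mix B) C * N C (B.mix A) := (hmix hMN A B).symm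
      _ = ∑ C, N (A.mix C) (C.mix A) * M (C.mix B) (B.mix C) := by
        simp only [← extendKernel_val]
        exact key
      _ = ∑ C, N A C * M C B := by simp only [hmix hM, hmix hN]
  · intro c hc
    rw [extendKernel, dif_neg, zero_mul]
    simp only [isSome_mix]
    exact fun h => hc h.1
  · intro c hc
    rw [extendKernel, dif_neg, zero_mul]
    exact fun h => hc h.2

end Final

/-- If the permutation representation of `G` on `V(X)` is multiplicity
free then, for every `0 ≤ i ≤ n`, the permutation representation of `G ≀ Sₙ` on
`V(B_X(n)_i)` is multiplicity free. -/
theorem generalized_johnson_multiplicity_free (G : Type) [Group G] [Fintype G] (X : Type) [Fintype X] [MulAction G X]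
    (hmf : IsMultiplicityFree (MonoidAlgebra ℂ G) (permModule G X))
    (n : ℕ) (i : ℕ) (hi : i ≤ n) :
    IsMultiplicityFree (MonoidAlgebra ℂ (WreathProduct G n))
      (permModule (WreathProduct G n) (JTuple X n i)) := by
  have : Finite (WreathProduct G n) := Finite.of_equiv _ SemidirectProduct.equivProd.symm
  exact isMultiplicityFree_permModule_iff.2 (isMultiplicityFree_permModule_iff.1 hmf).jTuple
end
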